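/- (Corollary 1.) Fix d in {(1,1),(0,1),(1,0)} and d' = (0,0), with P(D = d) > 0. Suppose Assumption DID holds for d and for d', P(D = d | X) > 0 and P(D = d' | X) > 0 a.s., and (m_d(X) − m_{d'}(X)) · p_d(X) is integrable. Then the outcome-regression representation identifies the path-dependent ATT: E[p_d(X)]^{-1} · E[(m_d(X) − m_{d'}(X)) · p_d(X)] = τ_{dd'}. -/

import Mathlib

open MeasureTheory Set
open scoped Classical

noncomputable section

namespace DIDMissing

variable {Ω : Type*} {𝓧 : Type*}

/-- Real-valued indicator of a set. -/
def ind (A : Set Ω) : Ω → ℝ := A.indicator fun _ => (1 : ℝ)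

/-- All treatment paths `{0,1}²` (coded as reals). -/
def allPaths : Set (ℝ × ℝ) := {(0, 0), (0, 1), (1, 0), (1, 1)}

/-- The three treated paths `{(1,1), (0,1), (1,0)}`. -/
def threePaths : Set (ℝ × ℝ) := {(1, 1), (0, 1), (1, 0)}

/-- The event `{D = d}` for a treatment path `d = (d₁, d₂)`. -/
def evD (D1 D2 : Ω → ℝ) (d : ℝ × ℝ) : Set Ω := {ω | D1 ω = d.1 ∧ D2 ω = d.2}

/-- The event `{D₂ = b}`. -/
def evD2 (D2 : Ω → ℝ) (b : ℝ) : Set Ω := {ω | D2 ω = b}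

/-- `g` is a (measurable-in-the-covariate) version of the conditional mean `E[Z ∣ A, X]`:
for every bounded measurable `h`, `E[1_A · Z · h(X)] = E[1_A · g(X) · h(X)]`. -/
def IsCondMeanGiven [MeasurableSpace Ω] [MeasurableSpace 𝓧] (P : Measure Ω) (X : Ω → 𝓧)
    (A : Set Ω) (Z : Ω → ℝ) (g : 𝓧 → ℝ) : Prop :=
  Measurable g ∧
    ∀ h : 𝓧 → ℝ, Measurable h → (∃ C, ∀ x, |h x| ≤ C) →
      ∫ ω, ind A ω * Z ω * h (X ω) ∂P = ∫ ω, ind A ω * g (X ω) * h (X ω) ∂P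

/-- Assumption DID for a path `d` relative to `d' = (0,0)`:
(i) no anticipation, `E[Y₀(d) ∣ D = d, X] = E[Y₀(0,0) ∣ D = d, X]` a.s., stated in the
version-free integral form; and (ii) conditional parallel trends, stated as the existence
of a common version of `E[Y₂(0,0) − Y₀(0,0) ∣ X]` and `E[Y₂(0,0) − Y₀(0,0) ∣ D = d, X]`. -/
def DID [MeasurableSpace Ω] [MeasurableSpace 𝓧] (P : Measure Ω) (X : Ω → 𝓧)
    (D1 D2 : Ω → ℝ) (Y0p Y2p : ℝ × ℝ → Ω → ℝ) (d : ℝ × ℝ) : Prop :=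
  (∀ h : 𝓧 → ℝ, Measurable h → (∃ C, ∀ x, |h x| ≤ C) →
      ∫ ω, ind (evD D1 D2 d) ω * Y0p d ω * h (X ω) ∂P
        = ∫ ω, ind (evD D1 D2 d) ω * Y0p (0, 0) ω * h (X ω) ∂P) ∧
  (∃ tr : 𝓧 → ℝ,
      IsCondMeanGiven P X Set.univ (fun ω => Y2p (0, 0) ω - Y0p (0, 0) ω) tr ∧
      IsCondMeanGiven P X (evD D1 D2 d) (fun ω => Y2p (0, 0) ω - Y0p (0, 0) ω) tr)

/-- Assumption MAR: `S ⟂ (D₁, ΔY) ∣ (D₂, X)`, where `q d₂` is a version of the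
missing-data probability `P(S = 1 ∣ D₂ = d₂, X)`, which is `(0,1]`-valued a.s. -/
def MAR [MeasurableSpace Ω] [MeasurableSpace 𝓧] (P : Measure Ω) (X : Ω → 𝓧)
    (D1 D2 S Y0 Y2 : Ω → ℝ) (q : ℝ → 𝓧 → ℝ) : Prop :=
  (∀ d2 ∈ ({0, 1} : Set ℝ), IsCondMeanGiven P X (evD2 D2 d2) S (q d2)) ∧
  (∀ d2 ∈ ({0, 1} : Set ℝ), ∀ᵐ ω ∂P, 0 < q d2 (X ω) ∧ q d2 (X ω) ≤ 1) ∧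
  (∀ d2 ∈ ({0, 1} : Set ℝ), ∀ f : ℝ × ℝ → ℝ, Measurable f → (∃ C, ∀ p, |f p| ≤ C) →
      ∀ h : 𝓧 → ℝ, Measurable h → (∃ C, ∀ x, |h x| ≤ C) →
        ∫ ω, ind (evD2 D2 d2) ω * S ω * f (D1 ω, Y2 ω - Y0 ω) * h (X ω) ∂P
          = ∫ ω, ind (evD2 D2 d2) ω * q d2 (X ω) * f (D1 ω, Y2 ω - Y0 ω) * h (X ω) ∂P)

/-- The path-dependent ATT `τ_{d,(0,0)} = E[Y₂(d) − Y₂(0,0) ∣ D = d]`. -/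
def tau [MeasurableSpace Ω] (P : Measure Ω) (D1 D2 : Ω → ℝ)
    (Y2p : ℝ × ℝ → Ω → ℝ) (d : ℝ × ℝ) : ℝ :=
  (P (evD D1 D2 d)).toReal⁻¹ * ∫ ω in evD D1 D2 d, (Y2p d ω - Y2p (0, 0) ω) ∂P

/-- Version-free conditional mean is the conditional expectation under the restricted measure. -/
theorem condMean_ae_eq [MeasurableSpace Ω] [m𝓧 : MeasurableSpace 𝓧]
    (P : Measure Ω) [IsProbabilityMeasure P] (X : Ω → 𝓧) (hX : Measurable X)
    (A : Set Ω) (hA : MeasurableSet A) (Z : Ω → ℝ) (hZ : Integrable Z P) (g : 𝓧 → ℝ)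
    (h : IsCondMeanGiven P X A Z g) :
    (fun ω => g (X ω)) =ᵐ[P.restrict A] (P.restrict A)[Z | m𝓧.comap X] := by
  have hm : m𝓧.comap X ≤ (inferInstance : MeasurableSpace Ω) := hX.comap_le
  obtain ⟨hg, hint⟩ := h
  have hZQ : Integrable Z (P.restrict A) := hZ.restrict
  have key : ∀ n : ℕ, (X ⁻¹' {x | |g x| ≤ n}).indicator (fun ω => g (X ω)) =ᵐ[P.restrict A]
      (X ⁻¹' {x | |g x| ≤ n}).indicator ((P.restrict A)[Z | m𝓧.comap X]) := by
    intro n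
    have hS : MeasurableSet {x | |g x| ≤ (n : ℝ)} := measurableSet_le hg.abs measurable_const
    have hS' : MeasurableSet[m𝓧.comap X] (X ⁻¹' {x | |g x| ≤ (n : ℝ)}) := ⟨_, hS, rfl⟩
    refine Filter.EventuallyEq.trans ?_ (condExp_indicator hZQ hS')
    have hgi : Integrable ((X ⁻¹' {x | |g x| ≤ (n : ℝ)}).indicator (fun ω => g (X ω)))
        (P.restrict A) := by
      refine Integrable.of_bound
        (((hg.comp hX).indicator (hm _ hS')).aestronglyMeasurable) (n : ℝ) ?_
      refine Filter.Eventually.of_forall fun ω => ?_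
      by_cases hω : ω ∈ X ⁻¹' {x | |g x| ≤ (n : ℝ)}
      · rw [Set.indicator_of_mem hω]
        exact hω
      · rw [Set.indicator_of_notMem hω]
        simp
    refine ae_eq_condExp_of_forall_setIntegral_eq hm (hZQ.indicator (hm _ hS'))
      (fun s _ _ => hgi.integrableOn) ?_ ?_
    · rintro s ⟨B, hB, rfl⟩ _
      have hBm : MeasurableSet (X ⁻¹' B) := hX hB
      have e := hint ((B ∩ {x | |g x| ≤ (n : ℝ)}).indicator fun _ => (1 : ℝ))
        (measurable_const.indicator (hB.inter hS))
        ⟨1, fun x => by by_cases hx : x ∈ B ∩ {x | |g x| ≤ (n : ℝ)} <;> simp [hx]⟩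
      rw [← integral_indicator hBm, ← integral_indicator hBm, ← integral_indicator hA,
        ← integral_indicator hA]
      have r : ∀ f : Ω → ℝ, A.indicator ((X ⁻¹' B).indicator
          ((X ⁻¹' {x | |g x| ≤ (n : ℝ)}).indicator f)) = fun ω => ind A ω * f ω *
            ((B ∩ {x | |g x| ≤ (n : ℝ)}).indicator fun _ => (1 : ℝ)) (X ω) := by
        intro f
        ext ω
        by_cases h1 : ω ∈ A <;> by_cases h2 : X ω ∈ B <;> by_cases h3 : |g (X ω)| ≤ (n : ℝ) <;>
          simp [ind, Set.indicator, h1, h2, h3]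
      rw [r, r]
      exact e.symm
    · refine StronglyMeasurable.aestronglyMeasurable ?_
      refine Measurable.stronglyMeasurable ?_
      exact (hg.comp (comap_measurable X)).indicator hS'
  have := ae_all_iff.2 key
  filter_upwards [this] with ω hω
  obtain ⟨n, hn⟩ := exists_nat_ge |g (X ω)|
  have := hω n
  have hmem : ω ∈ X ⁻¹' {x | |g x| ≤ (n : ℝ)} := hn
  rwa [Set.indicator_of_mem hmem, Set.indicator_of_mem hmem] at this

theorem evD_meas [MeasurableSpace Ω] (D1 D2 : Ω → ℝ)
    (hD1 : Measurable D1) (hD2 : Measurable D2) (d : ℝ × ℝ) : MeasurableSet (evD D1 D2 d) :=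
  (hD1 (measurableSet_singleton d.1)).inter (hD2 (measurableSet_singleton d.2))

theorem integral_ind [MeasurableSpace Ω] (P : Measure Ω) (A : Set Ω) (hA : MeasurableSet A)
    (f : Ω → ℝ) : ∫ ω, ind A ω * f ω * 1 ∂P = ∫ ω in A, f ω ∂P := by
  rw [← integral_indicator hA]
  congr 1
  ext ω
  by_cases h1 : ω ∈ A <;> simp [ind, h1]

/-- Corollary 1: the outcome-regression representation identifies the PDATT. -/
theorem statement_7
    [MeasurableSpace Ω] [m𝓧 : MeasurableSpace 𝓧]
    (P : Measure Ω) [IsProbabilityMeasure P]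
    (X : Ω → 𝓧) (hX : Measurable X)
    (Y0 Y2 D1 D2 : Ω → ℝ)
    (hY0 : Measurable Y0) (hY2 : Measurable Y2)
    (hD1 : Measurable D1) (hD2 : Measurable D2)
    (hY0i : Integrable Y0 P) (hY2i : Integrable Y2 P)
    (hD1v : ∀ ω, D1 ω = 0 ∨ D1 ω = 1) (hD2v : ∀ ω, D2 ω = 0 ∨ D2 ω = 1)
    (Y0p Y2p : ℝ × ℝ → Ω → ℝ)
    (hY0p : ∀ e ∈ allPaths, Measurable (Y0p e) ∧ Integrable (Y0p e) P)
    (hY2p : ∀ e ∈ allPaths, Measurable (Y2p e) ∧ Integrable (Y2p e) P)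
    (hcons0 : ∀ ω, Y0 ω = Y0p (D1 ω, D2 ω) ω)
    (hcons2 : ∀ ω, Y2 ω = Y2p (D1 ω, D2 ω) ω)
    (d : ℝ × ℝ) (hd : d ∈ threePaths) (hPd : 0 < P (evD D1 D2 d))
    (hDIDd : DID P X D1 D2 Y0p Y2p d) (hDIDd' : DID P X D1 D2 Y0p Y2p (0, 0))
    (pd pd' : 𝓧 → ℝ)
    (hpd : IsCondMeanGiven P X Set.univ (ind (evD D1 D2 d)) pd)
    (hpd' : IsCondMeanGiven P X Set.univ (ind (evD D1 D2 (0, 0))) pd')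
    (hpdpos : ∀ᵐ ω ∂P, 0 < pd (X ω)) (hpd'pos : ∀ᵐ ω ∂P, 0 < pd' (X ω))
    (md md' : 𝓧 → ℝ)
    (hmd : IsCondMeanGiven P X (evD D1 D2 d) (fun ω => Y2 ω - Y0 ω) md)
    (hmd' : IsCondMeanGiven P X (evD D1 D2 (0, 0)) (fun ω => Y2 ω - Y0 ω) md')
    (hpdi : Integrable (fun ω => pd (X ω)) P)
    (hfin : Integrable (fun ω => (md (X ω) - md' (X ω)) * pd (X ω)) P) :
    (∫ ω, pd (X ω) ∂P)⁻¹ * ∫ ω, (md (X ω) - md' (X ω)) * pd (X ω) ∂P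
      = tau P D1 D2 Y2p d := by
  have hA := evD_meas D1 D2 hD1 hD2 d
  have hA0 := evD_meas D1 D2 hD1 hD2 (0, 0)
  have hm : m𝓧.comap X ≤ (inferInstance : MeasurableSpace Ω) := hX.comap_le
  have hdall : d ∈ allPaths := by
    simp only [threePaths, allPaths, Set.mem_insert_iff, Set.mem_singleton_iff] at hd ⊢
    tauto
  have h0all : ((0, 0) : ℝ × ℝ) ∈ allPaths := by simp [allPaths]
  have hindi : ∀ e, Integrable (ind (evD D1 D2 e)) P := fun e =>
    (integrable_const (1 : ℝ)).indicator (evD_meas D1 D2 hD1 hD2 e)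
  have hWi : Integrable (fun ω => Y2p (0, 0) ω - Y0p (0, 0) ω) P :=
    (hY2p _ h0all).2.sub (hY0p _ h0all).2
  have hDi : Integrable (fun ω => Y2 ω - Y0 ω) P := hY2i.sub hY0i
  obtain ⟨hna, tr1, htr1, htr1A⟩ := hDIDd
  obtain ⟨-, tr0, htr0, htr0A⟩ := hDIDd'
  have a1 := condMean_ae_eq P X hX _ MeasurableSet.univ _ hWi _ htr1
  have a2 := condMean_ae_eq P X hX _ MeasurableSet.univ _ hWi _ htr0
  have a3 := condMean_ae_eq P X hX _ hA _ hWi _ htr1A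
  have a4 := condMean_ae_eq P X hX _ hA0 _ hWi _ htr0A
  have a5 := condMean_ae_eq P X hX _ hA _ hDi _ hmd
  have a6 := condMean_ae_eq P X hX _ hA0 _ hDi _ hmd'
  have a7 := condMean_ae_eq P X hX _ MeasurableSet.univ _ (hindi d) _ hpd
  have a8 := condMean_ae_eq P X hX _ MeasurableSet.univ _ (hindi (0, 0)) _ hpd'
  rw [Measure.restrict_univ] at a1 a2 a7 a8
  have hpd'i : Integrable (fun ω => pd' (X ω)) P := (integrable_congr a8).2 integrable_condExp
  -- on the untreated event the observed trend is the untreated trend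
  have hcong : (fun ω => Y2 ω - Y0 ω) =ᵐ[P.restrict (evD D1 D2 (0, 0))]
      (fun ω => Y2p (0, 0) ω - Y0p (0, 0) ω) := by
    filter_upwards [ae_restrict_mem hA0] with ω hω
    have e : (D1 ω, D2 ω) = ((0, 0) : ℝ × ℝ) := Prod.ext hω.1 hω.2
    rw [hcons0, hcons2, e]
  have b1 : (fun ω => md' (X ω)) =ᵐ[P.restrict (evD D1 D2 (0, 0))] (fun ω => tr0 (X ω)) :=
    a6.trans ((condExp_congr_ae hcong).trans a4.symm)
  have b2 : (fun ω => md' (X ω)) =ᵐ[P] (fun ω => tr0 (X ω)) := by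
    have hS : MeasurableSet {x | md' x ≠ tr0 x} :=
      (measurableSet_eq_fun hmd'.1 htr0.1).compl
    have e := hpd'.2 ({x | md' x ≠ tr0 x}.indicator fun _ => (1 : ℝ))
      (measurable_const.indicator hS)
      ⟨1, fun x => by by_cases hx : md' x = tr0 x <;> simp [hx]⟩
    have z : ∫ ω, ind Set.univ ω * ind (evD D1 D2 (0, 0)) ω *
        ({x | md' x ≠ tr0 x}.indicator fun _ => (1 : ℝ)) (X ω) ∂P = 0 := by
      refine integral_eq_zero_of_ae ?_
      filter_upwards [(ae_restrict_iff' hA0).1 b1] with ω hω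
      by_cases h1 : ω ∈ evD D1 D2 (0, 0)
      · simp [hω h1]
      · simp [ind, h1]
    rw [z] at e
    have e2 : ∫ ω, (X ⁻¹' {x | md' x ≠ tr0 x}).indicator (fun ω => pd' (X ω)) ω ∂P = 0 := by
      rw [e]
      congr 1
      ext ω
      by_cases h1 : md' (X ω) = tr0 (X ω) <;> simp [ind, Set.indicator, h1]
    rw [integral_eq_zero_iff_of_nonneg_ae ?_ (hpd'i.indicator (hX hS))] at e2
    · filter_upwards [e2, hpd'pos] with ω h1 h2
      by_contra h3
      have hmem : ω ∈ X ⁻¹' {x | md' x ≠ tr0 x} := h3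
      rw [Set.indicator_of_mem hmem] at h1
      exact h2.ne' h1
    · filter_upwards [hpd'pos] with ω h2
      by_cases h3 : ω ∈ X ⁻¹' {x | md' x ≠ tr0 x}
      · rw [Set.indicator_of_mem h3]
        exact h2.le
      · rw [Set.indicator_of_notMem h3]
        exact le_rfl
  have b3 : (fun ω => md' (X ω)) =ᵐ[P] (fun ω => tr1 (X ω)) := b2.trans (a2.trans a1.symm)
  have b4 : (fun ω => md' (X ω)) =ᵐ[P.restrict (evD D1 D2 d)]
      (P.restrict (evD D1 D2 d))[fun ω => Y2p (0, 0) ω - Y0p (0, 0) ω | m𝓧.comap X] :=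
    Filter.EventuallyEq.trans (ae_restrict_of_ae b3) a3
  have i1 : Integrable (fun ω => md (X ω)) (P.restrict (evD D1 D2 d)) :=
    (integrable_congr a5).2 integrable_condExp
  have i2 : Integrable (fun ω => md' (X ω)) (P.restrict (evD D1 D2 d)) :=
    (integrable_congr b4).2 integrable_condExp
  have c1 : ∫ ω in evD D1 D2 d, md (X ω) ∂P = ∫ ω in evD D1 D2 d, (Y2 ω - Y0 ω) ∂P := by
    rw [integral_congr_ae a5, integral_condExp hm]
  have c2 : ∫ ω in evD D1 D2 d, md' (X ω) ∂P
      = ∫ ω in evD D1 D2 d, (Y2p (0, 0) ω - Y0p (0, 0) ω) ∂P := by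
    rw [integral_congr_ae b4, integral_condExp hm]
  have c3 : ∫ ω in evD D1 D2 d, (Y2 ω - Y0 ω) ∂P
      = ∫ ω in evD D1 D2 d, (Y2p d ω - Y0p d ω) ∂P := by
    refine setIntegral_congr_fun hA fun ω hω => ?_
    have e : (D1 ω, D2 ω) = d := Prod.ext hω.1 hω.2
    simp only [hcons0, hcons2, e]
  have c4 : ∫ ω in evD D1 D2 d, Y0p d ω ∂P = ∫ ω in evD D1 D2 d, Y0p (0, 0) ω ∂P := by
    have := hna (fun _ => 1) measurable_const ⟨1, fun _ => by simp⟩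
    rwa [integral_ind P _ hA, integral_ind P _ hA] at this
  have c5 : ∫ ω in evD D1 D2 d, (md (X ω) - md' (X ω)) ∂P
      = ∫ ω in evD D1 D2 d, (Y2p d ω - Y2p (0, 0) ω) ∂P := by
    rw [integral_sub i1 i2, c1, c2, c3,
      integral_sub (hY2p _ hdall).2.restrict (hY0p _ hdall).2.restrict,
      integral_sub (hY2p _ h0all).2.restrict (hY0p _ h0all).2.restrict,
      integral_sub (hY2p _ hdall).2.restrict (hY2p _ h0all).2.restrict, c4]
    ring
  have c6 : ∫ ω, pd (X ω) ∂P = (P (evD D1 D2 d)).toReal := by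
    rw [integral_congr_ae a7, integral_condExp hm]
    simp only [ind]
    rw [integral_indicator hA]
    simp [Measure.real]
  have r : ∀ f : Ω → ℝ, (fun ω => f ω * ind (evD D1 D2 d) ω) = (evD D1 D2 d).indicator f := by
    intro f
    ext ω
    by_cases h1 : ω ∈ evD D1 D2 d <;> simp [ind, h1]
  have c7 : ∫ ω, (md (X ω) - md' (X ω)) * pd (X ω) ∂P
      = ∫ ω in evD D1 D2 d, (md (X ω) - md' (X ω)) ∂P := by
    have hf : StronglyMeasurable[m𝓧.comap X] (fun ω => md (X ω) - md' (X ω)) :=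
      Measurable.stronglyMeasurable ((hmd.1.sub hmd'.1).comp (comap_measurable X))
    have hfi : Integrable ((fun ω => md (X ω) - md' (X ω)) * ind (evD D1 D2 d)) P := by
      have : Integrable (fun ω => (md (X ω) - md' (X ω)) * ind (evD D1 D2 d) ω) P := by
        rw [r, integrable_indicator_iff hA]
        exact i1.sub i2
      exact this
    have h1 := condExp_mul_of_stronglyMeasurable_left hf hfi (hindi d)
    rw [← integral_indicator hA, ← r]
    have h2 := integral_condExp (μ := P) hm
      (f := (fun ω => md (X ω) - md' (X ω)) * ind (evD D1 D2 d))
    rw [integral_congr_ae h1] at h2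
    refine Eq.trans (integral_congr_ae ?_) h2
    filter_upwards [a7] with ω hω
    simp only [Pi.mul_apply, hω]
  rw [c6, c7, c5, tau]

end DIDMissing
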